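/- Let X be a real Banach space and B : X → X a map such that (i) B is continuous, (ii) the image under B of every bounded subset of X has compact closure, and (iii) there exists a constant C such that ‖z‖ ≤ C for all z ∈ X and all σ ∈ [0, 1] satisfying z = σ·B(z). Then B has a fixed point, i.e., there exists z ∈ X with B(z) = z. -/

import Mathlib

/-!
For a compactly supported `C¹` map `g` on a Euclidean space and a polynomial `p`, the integral of
`det (1 + t Dg x) * p (‖x + t g x‖ ^ 2)` over a compact set containing the support of `g` is a
polynomial in `t`. For small `t` the map `x ↦ x + t g x` is a bijection preserving that set, so the
change of variables formula shows that this polynomial is constant near `0`, hence everywhere, and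
its value at `t = 1` is the integral of `p (‖x‖ ^ 2)`. By Weierstrass, `p` may be replaced by any
continuous function; taking one concentrated near `0` shows that `x + g x` has a zero. This is
Brouwer's theorem for `-g`.

Schauder's theorem follows by pushing a compact set into finite-dimensional subspaces with
partitions of unity, and the Leray–Schauder theorem is Schauder's theorem for the composition of `B`
with the radial retraction onto a ball: a fixed point `z` of it outside the ball of radius `R` would
give `y = σ • B y` with `‖y‖ = R` and `0 < σ < 1`.
-/

open Bornology Filter Function MeasureTheory Metric Polynomial Set Topology

section PolynomialFamilies

theorem exists_polynomial_eval_eq_det_one_add_smul {R M : Type*} [CommRing R] [Nontrivial R]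
    [AddCommGroup M] [Module R M] [Module.Free R M] [Module.Finite R M] (A : Module.End R M) :
    ∃ p : R[X], p.natDegree ≤ Module.finrank R M ∧ ∀ t, p.eval t = LinearMap.det (1 + t • A) := by
  let b := Module.finBasis R M
  let N := LinearMap.toMatrix b b A
  refine ⟨Matrix.det ((X : R[X]) • N.map C + (1 : Matrix _ _ R).map C),
    by simpa only [Fintype.card_fin] using natDegree_det_X_add_C_le N 1, fun t => ?_⟩
  have toMatrix_one_add_smul : LinearMap.toMatrix b b (1 + t • A) = t • N + 1 := by
    rw [map_add, map_smul, LinearMap.toMatrix_one, add_comm]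
  rw [← LinearMap.det_toMatrix b, toMatrix_one_add_smul, ← coe_evalRingHom, RingHom.map_det]
  congr 1
  ext i j
  simp [Matrix.one_apply, apply_ite, mul_comm t]

theorem exists_polynomial_eval_eq_integral {α : Type*} [MeasurableSpace α] {μ : Measure α}
    {q : α → ℝ[X]} {N : ℕ} (hdeg : ∀ x, (q x).natDegree ≤ N)
    (hint : ∀ t, Integrable (fun x => (q x).eval t) μ) :
    ∃ P : ℝ[X], ∀ t, P.eval t = ∫ x, (q x).eval t ∂μ := by
  -- Interpolation, because only the evaluations, not the coefficients, are assumed integrable.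
  let nodes := Finset.range (N + 1)
  let v : ℕ → ℝ := Nat.cast
  have hv : InjOn v nodes := Nat.cast_injective.injOn
  have eval_interpolate (r : ℕ → ℝ) (t : ℝ) : (Lagrange.interpolate nodes v r).eval t =
      ∑ i ∈ nodes, r i * (Lagrange.basis nodes v i).eval t := by
    simp only [Lagrange.interpolate_apply, eval_finsetSum, eval_mul, eval_C]
  refine ⟨Lagrange.interpolate nodes v fun i => ∫ x, (q x).eval (v i) ∂μ, fun t => ?_⟩
  have eval_q (x : α) : (q x).eval t =
      ∑ i ∈ nodes, (q x).eval (v i) * (Lagrange.basis nodes v i).eval t := by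
    have hcard : (q x).degree < nodes.card := by
      rw [Finset.card_range]
      exact degree_le_natDegree.trans_lt (Nat.cast_lt.2 (Nat.lt_succ_of_le (hdeg x)))
    rw [← eval_interpolate, ← Lagrange.eq_interpolate hv hcard]
  simp_rw [eval_q, eval_interpolate]
  rw [integral_finsetSum _ fun i _ => (hint (v i)).mul_const _]
  simp only [integral_mul_const]

theorem eq_C_of_eventually_eval_eq {P : ℝ[X]} {c t₀ : ℝ} (h : ∀ᶠ t in 𝓝 t₀, P.eval t = c) :
    P = C c :=
  eq_of_infinite_eval_eq _ _ <| by simpa only [eval_C] using infinite_of_mem_nhds t₀ h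

end PolynomialFamilies

section ChangeOfVariables

variable {E : Type*} [NormedAddCommGroup E] [NormedSpace ℝ E]

theorem continuous_det_one_add {α : Type*} [TopologicalSpace α] {A : α → E →L[ℝ] E}
    (hA : Continuous A) : Continuous fun x => (1 + A x).det :=
  ContinuousLinearMap.continuous_det.comp (continuous_const.add hA)

theorem det_one_add_pos [FiniteDimensional ℝ E] {A : E →L[ℝ] E} (hA : ‖A‖ < 1) :
    0 < (1 + A).det := by
  have : CompleteSpace E := FiniteDimensional.complete ℝ E
  have det_ne_zero (t : ℝ) (ht : t ∈ Icc (0 : ℝ) 1) : (1 + t • A).det ≠ 0 := by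
    have hnorm : ‖-(t • A)‖ < 1 := by
      rw [norm_neg, norm_smul, Real.norm_of_nonneg ht.1]
      exact (mul_le_of_le_one_left (norm_nonneg A) ht.2).trans_lt hA
    have hunit : IsUnit (1 + t • A) := by
      simpa only [sub_neg_eq_add] using isUnit_one_sub_of_norm_lt_one hnorm
    exact (LinearMap.isUnit_det _ (hunit.map ContinuousLinearMap.toLinearMapRingHom)).ne_zero
  by_contra! hneg
  have hcont : Continuous fun t : ℝ => (1 + t • A).det := continuous_det_one_add (by fun_prop)
  have hmem : (0 : ℝ) ∈ Icc (1 + (1 : ℝ) • A).det (1 + (0 : ℝ) • A).det :=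
    ⟨by rwa [one_smul], by simp [ContinuousLinearMap.det]⟩
  obtain ⟨t, ht, hdet⟩ := intermediate_value_Icc' zero_le_one hcont.continuousOn hmem
  exact det_ne_zero t ht hdet

theorem bijective_id_add_of_lipschitzWith [CompleteSpace E] {g : E → E} {L : NNReal}
    (hg : LipschitzWith L g) (hL : L < 1) : Bijective fun x => x + g x := by
  have happrox : ApproximatesLinearOn (fun x => x + g x)
      (ContinuousLinearEquiv.refl ℝ E : E →L[ℝ] E) univ L := by
    apply LipschitzOnWith.approximatesLinearOn
    convert hg.lipschitzOnWith (s := univ) using 1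
    ext x
    simp
  have hsmall : Subsingleton E ∨
      L < ‖((ContinuousLinearEquiv.refl ℝ E).symm : E →L[ℝ] E)‖₊⁻¹ := by
    rcases subsingleton_or_nontrivial E with h | h
    · exact .inl h
    · right
      simpa using hL
  exact ⟨injOn_univ.1 (happrox.injOn hsmall), happrox.surjective hsmall⟩

theorem image_id_add_eq_of_support_subset {M : Type*} [AddZeroClass M] {g : M → M} {S : Set M}
    (hbij : Bijective fun x => x + g x) (hS : support g ⊆ S) : (fun x => x + g x) '' S = S := by
  rw [← compl_inj_iff, ← image_compl_eq hbij]
  refine (image_congr fun x hx => ?_).trans (image_id _)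
  rw [notMem_support.1 fun h => hx (hS h), add_zero, id]

variable [FiniteDimensional ℝ E] [MeasurableSpace E] [BorelSpace E]
  (μ : Measure E) [μ.IsAddHaarMeasure]

theorem setIntegral_det_smul_comp_id_add {F : Type*} [NormedAddCommGroup F] [NormedSpace ℝ F]
    {g : E → E} {L : NNReal} (hg : LipschitzWith L g) (hL : L < 1) (hd : Differentiable ℝ g)
    {S : Set E} (hS : MeasurableSet S) (hgS : support g ⊆ S) (φ : E → F) :
    ∫ x in S, (1 + fderiv ℝ g x).det • φ (x + g x) ∂μ = ∫ x in S, φ x ∂μ := by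
  have : CompleteSpace E := FiniteDimensional.complete ℝ E
  have hbij := bijective_id_add_of_lipschitzWith hg hL
  have hderiv (x : E) : HasFDerivAt (fun x => x + g x) (1 + fderiv ℝ g x) x :=
    (hasFDerivAt_id x).add (hd x).hasFDerivAt
  have hdet (x : E) : |(1 + fderiv ℝ g x).det| = (1 + fderiv ℝ g x).det :=
    abs_of_pos <| det_one_add_pos <|
      (norm_fderiv_le_of_lipschitz ℝ hg).trans_lt (NNReal.coe_lt_one.2 hL)
  calc ∫ x in S, (1 + fderiv ℝ g x).det • φ (x + g x) ∂μ
      = ∫ x in (fun x => x + g x) '' S, φ x ∂μ := by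
        rw [integral_image_eq_integral_abs_det_fderiv_smul μ hS
          (fun x _ => (hderiv x).hasFDerivWithinAt) hbij.1.injOn]
        simp only [hdet]
    _ = ∫ x in S, φ x ∂μ := by rw [image_id_add_eq_of_support_subset hbij hgS]

end ChangeOfVariables

section Weierstrass

theorem exists_polynomial_tendstoUniformlyOn {a b : ℝ} {ψ : ℝ → ℝ} (hψ : ContinuousOn ψ (Icc a b)) :
    ∃ p : ℕ → ℝ[X], TendstoUniformlyOn (fun n s => (p n).eval s) ψ atTop (Icc a b) := by
  choose p hp using fun n : ℕ => exists_polynomial_near_of_continuousOn a b ψ hψ (1 / ((n : ℝ) + 1))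
    Nat.one_div_pos_of_nat
  refine ⟨p, Metric.tendstoUniformlyOn_iff.2 fun ε hε => ?_⟩
  filter_upwards [tendsto_one_div_add_atTop_nhds_zero_nat.eventually_lt_const hε] with n hn s hs
  rw [dist_comm]
  exact (hp n s hs).trans hn

variable {α : Type*} [MeasurableSpace α] {μ : Measure α} {w u : α → ℝ} {a b : ℝ} {ψ : ℝ → ℝ}

theorem tendsto_integral_mul_comp_of_tendstoUniformlyOn (hw : Integrable w μ)
    (hu : AEStronglyMeasurable u μ) (huab : ∀ᵐ x ∂μ, u x ∈ Icc a b)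
    (hψ : ContinuousOn ψ (Icc a b)) {f : ℕ → ℝ → ℝ} (hf : ∀ n, Continuous (f n))
    (hlim : TendstoUniformlyOn f ψ atTop (Icc a b)) :
    Tendsto (fun n => ∫ x, w x * f n (u x) ∂μ) atTop (𝓝 (∫ x, w x * ψ (u x) ∂μ)) := by
  obtain ⟨M, hM⟩ := isCompact_Icc.exists_bound_of_continuousOn hψ
  refine tendsto_integral_filter_of_dominated_convergence (fun x => ‖w x‖ * (M + 1))
    (.of_forall fun n => hw.aestronglyMeasurable.mul ((hf n).comp_aestronglyMeasurable hu)) ?_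
    (hw.norm.mul_const _) ?_
  · filter_upwards [Metric.tendstoUniformlyOn_iff.1 hlim 1 one_pos] with n hn
    filter_upwards [huab] with x hx
    have hclose : ‖f n (u x) - ψ (u x)‖ < 1 := by
      rw [← dist_eq_norm, dist_comm]
      exact hn _ hx
    rw [norm_mul]
    gcongr
    linarith [norm_le_norm_add_norm_sub' (f n (u x)) (ψ (u x)), hM _ hx]
  · filter_upwards [huab] with x hx
    exact (hlim.tendsto_at hx).const_mul _

theorem integral_mul_comp_eq_of_forall_polynomial {β : Type*} [MeasurableSpace β] {ν : Measure β}
    {w' u' : β → ℝ} (hw : Integrable w μ) (hu : AEStronglyMeasurable u μ)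
    (huab : ∀ᵐ x ∂μ, u x ∈ Icc a b) (hw' : Integrable w' ν) (hu' : AEStronglyMeasurable u' ν)
    (huab' : ∀ᵐ y ∂ν, u' y ∈ Icc a b)
    (h : ∀ p : ℝ[X], ∫ x, w x * p.eval (u x) ∂μ = ∫ y, w' y * p.eval (u' y) ∂ν)
    (hψ : ContinuousOn ψ (Icc a b)) : ∫ x, w x * ψ (u x) ∂μ = ∫ y, w' y * ψ (u' y) ∂ν := by
  obtain ⟨p, hp⟩ := exists_polynomial_tendstoUniformlyOn hψ
  have hcont (n : ℕ) : Continuous fun s => (p n).eval s := (p n).continuous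
  refine tendsto_nhds_unique
    (tendsto_integral_mul_comp_of_tendstoUniformlyOn hw hu huab hψ hcont hp) ?_
  simp_rw [h]
  exact tendsto_integral_mul_comp_of_tendstoUniformlyOn hw' hu' huab' hψ hcont hp

end Weierstrass

theorem setIntegral_pos_of_continuous {α : Type*} [TopologicalSpace α] [T2Space α]
    [MeasurableSpace α] [OpensMeasurableSpace α] {μ : Measure α} [IsFiniteMeasureOnCompacts μ]
    [μ.IsOpenPosMeasure] {f : α → ℝ} {K : Set α} {x₀ : α} (hf : Continuous f) (hf₀ : 0 ≤ f)
    (hx₀ : f x₀ ≠ 0) (hK : IsCompact K) (hKx₀ : K ∈ 𝓝 x₀) : 0 < ∫ x in K, f x ∂μ := by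
  rw [setIntegral_pos_iff_support_of_nonneg_ae (.of_forall hf₀)
    (hf.continuousOn.integrableOn_compact hK)]
  exact μ.measure_pos_of_mem_nhds (inter_mem (hf.continuousAt.eventually_ne hx₀) hKx₀)

section Moments

variable {E : Type*} [NormedAddCommGroup E] [InnerProductSpace ℝ E]

theorem exists_polynomial_eval_eq_eval_norm_add_smul_sq (p : ℝ[X]) (x v : E) :
    ∃ q : ℝ[X], q.natDegree ≤ p.natDegree * 2 ∧ ∀ t, q.eval t = p.eval (‖x + t • v‖ ^ 2) := by
  refine ⟨p.comp (C (‖v‖ ^ 2) * X ^ 2 + C (2 * inner ℝ x v) * X + C (‖x‖ ^ 2)),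
    natDegree_comp_le.trans (Nat.mul_le_mul_left _ natDegree_quadratic_le), fun t => ?_⟩
  rw [eval_comp, norm_add_sq_real, inner_smul_right, norm_smul, mul_pow, Real.norm_eq_abs, sq_abs]
  congr 1
  simp only [eval_add, eval_mul, eval_C, eval_pow, eval_X]
  ring

variable [FiniteDimensional ℝ E] [MeasurableSpace E] [BorelSpace E]
  (μ : Measure E) [μ.IsAddHaarMeasure] {g : E → E} {K : Set E}

theorem setIntegral_det_mul_eval_norm_sq (hg : ContDiff ℝ 1 g) (hK : IsCompact K)
    (hgK : support g ⊆ K) (p : ℝ[X]) :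
    ∫ x in K, (1 + fderiv ℝ g x).det * p.eval (‖x + g x‖ ^ 2) ∂μ =
      ∫ x in K, p.eval (‖x‖ ^ 2) ∂μ := by
  choose d hd_deg hd using fun x => exists_polynomial_eval_eq_det_one_add_smul
    (fderiv ℝ g x : E →ₗ[ℝ] E)
  choose r hr_deg hr using fun x => exists_polynomial_eval_eq_eval_norm_add_smul_sq p x (g x)
  have eval_integrand (t : ℝ) (x : E) : (d x * r x).eval t =
      (1 + t • fderiv ℝ g x).det * p.eval (‖x + t • g x‖ ^ 2) := by
    rw [eval_mul, hd, hr]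
    rfl
  obtain ⟨P, hP⟩ : ∃ P : ℝ[X], ∀ t, P.eval t = ∫ x in K, (d x * r x).eval t ∂μ := by
    refine exists_polynomial_eval_eq_integral
      (fun x => natDegree_mul_le.trans (add_le_add (hd_deg x) (hr_deg x))) fun t => ?_
    simp only [eval_integrand]
    have hdet : Continuous fun x => (1 + t • fderiv ℝ g x).det :=
      continuous_det_one_add ((hg.continuous_fderiv one_ne_zero).const_smul t)
    have hgc := hg.continuous
    exact (hdet.mul (by fun_prop)).continuousOn.integrableOn_compact hK
  obtain ⟨L, hL⟩ := hg.lipschitzWith_of_hasCompactSupport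
    (HasCompactSupport.of_support_subset_isCompact hK hgK) one_ne_zero
  have eval_P_near_zero : ∀ᶠ t in 𝓝 0, P.eval t = ∫ x in K, p.eval (‖x‖ ^ 2) ∂μ := by
    have hcontr : ∀ᶠ t : ℝ in 𝓝 0, ‖t‖₊ * L < 1 :=
      (show Continuous fun t : ℝ => ‖t‖₊ * L by fun_prop).continuousAt.eventually_lt_const (by simp)
    filter_upwards [hcontr] with t ht
    have hdiff : Differentiable ℝ g := hg.differentiable one_ne_zero
    have hlip : LipschitzWith (‖t‖₊ * L) (t • g) := (lipschitzWith_smul t).comp hL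
    have hsupp : support (t • g) ⊆ K := (support_const_smul_subset t g).trans hgK
    rw [hP, ← setIntegral_det_smul_comp_id_add μ hlip ht (hdiff.const_smul t) hK.measurableSet
      hsupp fun x => p.eval (‖x‖ ^ 2)]
    simp only [eval_integrand, smul_eq_mul, Pi.smul_apply, fderiv_const_smul (hdiff _)]
  have eval_P_one := hP 1
  rw [eq_C_of_eventually_eval_eq eval_P_near_zero, eval_C] at eval_P_one
  simpa only [eval_integrand, one_smul] using eval_P_one.symm

theorem setIntegral_det_mul_comp_norm_sq (hg : ContDiff ℝ 1 g) (hK : IsCompact K)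
    (hgK : support g ⊆ K) {ψ : ℝ → ℝ} (hψ : Continuous ψ) :
    ∫ x in K, (1 + fderiv ℝ g x).det * ψ (‖x + g x‖ ^ 2) ∂μ = ∫ x in K, ψ (‖x‖ ^ 2) ∂μ := by
  have hgc := hg.continuous
  have hdet : Continuous fun x => (1 + fderiv ℝ g x).det :=
    continuous_det_one_add (hg.continuous_fderiv one_ne_zero)
  have hmoved : Continuous fun x => ‖x + g x‖ ^ 2 := by fun_prop
  have hfixed : Continuous fun x : E => ‖x‖ ^ 2 := by fun_prop
  obtain ⟨b, hb⟩ := hK.bddAbove_image (hmoved.max hfixed).continuousOn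
  have hmax (x : E) (hx : x ∈ K) : max (‖x + g x‖ ^ 2) (‖x‖ ^ 2) ≤ b := hb (mem_image_of_mem _ hx)
  have := integral_mul_comp_eq_of_forall_polynomial (μ := μ.restrict K) (ν := μ.restrict K)
    (w' := fun _ => 1) (a := 0) (b := b)
    (hdet.continuousOn.integrableOn_compact hK) hmoved.aestronglyMeasurable
    (ae_restrict_of_forall_mem hK.measurableSet fun x hx =>
      ⟨by positivity, (le_max_left _ _).trans (hmax x hx)⟩)
    (integrableOn_const hK.measure_lt_top.ne) hfixed.aestronglyMeasurable
    (ae_restrict_of_forall_mem hK.measurableSet fun x hx =>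
      ⟨by positivity, (le_max_right _ _).trans (hmax x hx)⟩)
    (fun p => by simpa only [one_mul] using setIntegral_det_mul_eval_norm_sq μ hg hK hgK p)
    hψ.continuousOn
  simpa only [one_mul] using this

end Moments

theorem exists_isFixedPt_of_forall_exists_dist_lt {X : Type*} [MetricSpace X] {T : X → X}
    (hT : Continuous T) {K : Set X} (hK : IsCompact K) (hTK : ∀ x, T x ∈ K)
    (happrox : ∀ ε > 0, ∃ x, dist (T x) x < ε) : ∃ x, IsFixedPt T x := by
  choose x hx using fun n : ℕ => happrox (1 / ((n : ℝ) + 1)) Nat.one_div_pos_of_nat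
  obtain ⟨y, -, φ, hφ, hy⟩ := hK.tendsto_subseq fun n => hTK (x n)
  have hdist : Tendsto (fun n => dist (T (x (φ n))) (x (φ n))) atTop (𝓝 0) :=
    squeeze_zero (fun _ => dist_nonneg) (fun n => (hx (φ n)).le)
      (tendsto_one_div_add_atTop_nhds_zero_nat.comp hφ.tendsto_atTop)
  have hxy : Tendsto (x ∘ φ) atTop (𝓝 y) := hy.congr_dist hdist
  exact ⟨y, tendsto_nhds_unique ((hT.tendsto y).comp hxy) hy⟩

section Brouwer

theorem exists_isFixedPt_of_contDiff {E : Type*} [NormedAddCommGroup E] [InnerProductSpace ℝ E]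
    [FiniteDimensional ℝ E] {g : E → E} (hg : ContDiff ℝ 1 g) (hsupp : HasCompactSupport g) :
    ∃ x, IsFixedPt g x := by
  borelize E
  by_contra! hfix
  obtain ⟨R, hR, hgR⟩ := hsupp.isCompact.isBounded.subset_closedBall_lt 0 0
  have hball : IsCompact (closedBall (0 : E) R) := isCompact_closedBall 0 R
  have hdispl : Continuous fun x => ‖x + -g x‖ ^ 2 := by
    have := hg.continuous
    fun_prop
  obtain ⟨x₀, -, hmin⟩ := hball.exists_isMinOn ⟨0, mem_closedBall_self hR.le⟩ hdispl.continuousOn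
  set c := ‖x₀ + -g x₀‖ ^ 2
  have hc : 0 < c := by
    have : x₀ + -g x₀ ≠ 0 := fun h => hfix x₀ (add_neg_eq_zero.1 h).symm
    positivity
  let ψ : ℝ → ℝ := fun s => max 0 (c - s)
  have hψ : Continuous ψ := by fun_prop
  have hψ_displ (x : E) (hx : x ∈ closedBall 0 R) : ψ (‖x + -g x‖ ^ 2) = 0 :=
    max_eq_left (sub_nonpos.2 (hmin hx))
  have hsupport : support (fun x => -g x) ⊆ closedBall 0 R := by
    rw [support_fun_neg]
    exact (subset_tsupport g).trans hgR
  have hpos : 0 < ∫ x in closedBall (0 : E) R, ψ (‖x‖ ^ 2) :=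
    setIntegral_pos_of_continuous (x₀ := 0) (by fun_prop) (fun x => le_max_left _ _)
      (by simp [ψ, hc]) hball (closedBall_mem_nhds 0 hR)
  rw [← setIntegral_det_mul_comp_norm_sq volume hg.neg hball hsupport hψ,
    setIntegral_eq_zero_of_forall_eq_zero fun x hx => by rw [hψ_displ x hx, mul_zero]] at hpos
  exact hpos.false

variable {E : Type*} [NormedAddCommGroup E] [NormedSpace ℝ E] [FiniteDimensional ℝ E] {g : E → E}

theorem exists_isFixedPt_of_hasCompactSupport (hg : Continuous g) (hsupp : HasCompactSupport g) :
    ∃ x, IsFixedPt g x := by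
  refine exists_isFixedPt_of_forall_exists_dist_lt hg (hsupp.isCompact_range hg) mem_range_self
    fun ε hε => ?_
  obtain ⟨h, hh, happrox, hsub⟩ := hg.exists_contDiff_approx 1 continuous_const fun _ => hε
  let e : E ≃L[ℝ] EuclideanSpace ℝ (Fin (Module.finrank ℝ E)) := toEuclidean
  have hconj : HasCompactSupport (e ∘ h ∘ e.symm) :=
    ((hsupp.mono hsub).comp_homeomorph e.symm.toHomeomorph).comp_left e.map_zero
  obtain ⟨y, hy⟩ := exists_isFixedPt_of_contDiff
    (e.contDiff.comp (hh.comp e.symm.contDiff)) hconj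
  have hfix : h (e.symm y) = e.symm y := e.eq_symm_apply.2 hy
  refine ⟨e.symm y, ?_⟩
  simpa only [hfix, dist_comm] using happrox (e.symm y)

theorem exists_isFixedPt_of_isBounded_range (hg : Continuous g) (hbdd : IsBounded (range g)) :
    ∃ x, IsFixedPt g x := by
  obtain ⟨r, hr, hgr⟩ := hbdd.subset_closedBall_lt 0 0
  let χ : ContDiffBump (0 : E) := ⟨r, r + 1, hr, lt_add_one r⟩
  obtain ⟨x, hx⟩ := exists_isFixedPt_of_hasCompactSupport (g := fun x => χ x • g x)
    (χ.continuous.smul hg) χ.hasCompactSupport.smul_right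
  have hxr : ‖x‖ ≤ r := calc
    ‖x‖ = χ x * ‖g x‖ := by rw [← Real.norm_of_nonneg χ.nonneg, ← norm_smul, hx.eq]
    _ ≤ ‖g x‖ := mul_le_of_le_one_left (norm_nonneg _) χ.le_one
    _ ≤ r := mem_closedBall_zero_iff.1 (hgr (mem_range_self x))
  have hχ : χ x = 1 := χ.one_of_mem_closedBall (mem_closedBall_zero_iff.2 hxr)
  exact ⟨x, by simpa only [IsFixedPt, hχ, one_smul] using hx⟩

end Brouwer

section LeraySchauder

variable {X : Type*} [NormedAddCommGroup X] [NormedSpace ℝ X]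

theorem exists_finiteDimensional_approx {K : Set X} (hK : IsCompact K) {ε : ℝ} (hε : 0 < ε) :
    ∃ (V : Submodule ℝ X) (π : X → V), FiniteDimensional ℝ V ∧ Continuous π ∧
      IsBounded (range π) ∧ ∀ x ∈ K, dist (π x : X) x < ε := by
  obtain ⟨s, -, hs, hcover⟩ := hK.finite_cover_balls hε
  have := hs.fintype
  obtain ⟨ρ, hρ⟩ := PartitionOfUnity.exists_isSubordinate hK.isClosed (fun i : s => ball (i : X) ε)
    (fun _ => isOpen_ball) (by rwa [iUnion_coe_set])
  let v : s → Submodule.span ℝ s := fun i => ⟨i, Submodule.subset_span i.2⟩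
  refine ⟨Submodule.span ℝ s, fun x => ∑ i, ρ i x • v i, .span_of_finite ℝ hs, by fun_prop, ?_, ?_⟩
  · refine isBounded_iff_forall_norm_le.2 ⟨∑ i, ‖v i‖, forall_mem_range.2 fun x => ?_⟩
    refine norm_sum_le_of_le _ fun i _ => ?_
    rw [norm_smul, Real.norm_of_nonneg (ρ.nonneg i x)]
    exact mul_le_of_le_one_left (norm_nonneg _) (ρ.le_one i x)
  · intro x hx
    have hmem : ∑ᶠ i, ρ i x • (i : X) ∈ ball x ε := by
      refine (convex_ball x ε).finsum_mem (fun i => ρ.nonneg i x) (ρ.sum_eq_one hx) fun i hi => ?_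
      exact mem_ball_comm.1 (hρ i (subset_tsupport _ hi))
    simpa [finsum_eq_sum_of_fintype, v] using hmem

theorem exists_isFixedPt_of_forall_mem_isCompact {T : X → X} (hT : Continuous T) {K : Set X}
    (hK : IsCompact K) (hTK : ∀ x, T x ∈ K) : ∃ x, IsFixedPt T x := by
  refine exists_isFixedPt_of_forall_exists_dist_lt hT hK hTK fun ε hε => ?_
  obtain ⟨V, π, _, hπ, hbdd, happrox⟩ := exists_finiteDimensional_approx hK hε
  obtain ⟨v, hv⟩ := exists_isFixedPt_of_isBounded_range (g := fun v : V => π (T v)) (by fun_prop)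
    (hbdd.subset (range_comp_subset_range (fun v : V => T v) π))
  refine ⟨v, ?_⟩
  rw [dist_comm]
  simpa only [hv.eq] using happrox (T v) (hTK v)

/-- The radial retraction of a normed space onto the closed ball of radius `R` about `0`, used to
extend a map from the ball to the whole space. Dividing by `max R ‖z‖` gives one formula inside and
outside the ball; it is meant for `0 < R`. -/
noncomputable def radialRetraction (R : ℝ) (z : X) : X :=
  (R / max R ‖z‖) • z

theorem radialRetraction_of_norm_le {R : ℝ} (hR : 0 < R) {z : X} (hz : ‖z‖ ≤ R) :
    radialRetraction R z = z := by
  rw [radialRetraction, max_eq_left hz, div_self hR.ne', one_smul]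

theorem radialRetraction_of_le_norm {R : ℝ} {z : X} (hz : R ≤ ‖z‖) :
    radialRetraction R z = (R / ‖z‖) • z := by
  rw [radialRetraction, max_eq_right hz]

theorem norm_radialRetraction_of_le_norm {R : ℝ} (hR : 0 < R) {z : X} (hz : R ≤ ‖z‖) :
    ‖radialRetraction R z‖ = R := by
  have := hR.trans_le hz
  rw [radialRetraction_of_le_norm hz, norm_smul, Real.norm_of_nonneg (by positivity),
    div_mul_cancel₀ R this.ne']

theorem radialRetraction_mem_closedBall {R : ℝ} (hR : 0 < R) (z : X) :
    radialRetraction R z ∈ closedBall 0 R := by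
  rw [mem_closedBall_zero_iff]
  rcases le_total ‖z‖ R with hz | hz
  · rwa [radialRetraction_of_norm_le hR hz]
  · exact (norm_radialRetraction_of_le_norm hR hz).le

theorem continuous_radialRetraction {R : ℝ} (hR : 0 < R) :
    Continuous (radialRetraction R : X → X) :=
  (continuous_const.div (by fun_prop) fun _ => (lt_max_of_lt_left hR).ne').smul continuous_id

theorem exists_isFixedPt_of_forall_sphere_ne_smul {R : ℝ} (hR : 0 < R) {f : X → X}
    (hf : ContinuousOn f (closedBall 0 R)) (hcompact : IsCompact (closure (f '' closedBall 0 R)))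
    (hsphere : ∀ z ∈ sphere 0 R, ∀ σ ∈ Ioo (0 : ℝ) 1, z ≠ σ • f z) :
    ∃ z ∈ closedBall 0 R, IsFixedPt f z := by
  have hmem (z : X) : radialRetraction R z ∈ closedBall 0 R := radialRetraction_mem_closedBall hR z
  obtain ⟨z, hz⟩ := exists_isFixedPt_of_forall_mem_isCompact
    (T := fun z => f (radialRetraction R z))
    (hf.comp_continuous (continuous_radialRetraction hR) hmem) hcompact
    (fun z => subset_closure (mem_image_of_mem f (hmem z)))
  rcases le_or_gt ‖z‖ R with hzR | hzR
  · exact ⟨z, mem_closedBall_zero_iff.2 hzR,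
      by simpa only [IsFixedPt, radialRetraction_of_norm_le hR hzR] using hz⟩
  · have hσ : R / ‖z‖ ∈ Ioo (0 : ℝ) 1 :=
      ⟨div_pos hR (hR.trans hzR), (div_lt_one (hR.trans hzR)).2 hzR⟩
    refine absurd ?_ (hsphere (radialRetraction R z)
      (mem_sphere_zero_iff_norm.2 (norm_radialRetraction_of_le_norm hR hzR.le)) _ hσ)
    rw [hz.eq, radialRetraction_of_le_norm hzR.le]

end LeraySchauder

theorem stmt_13_general {X : Type*} [NormedAddCommGroup X] [NormedSpace ℝ X]
    (B : X → X) (hcont : Continuous B)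
    (hcompact : ∀ S : Set X, Bornology.IsBounded S → IsCompact (closure (B '' S)))
    (C : ℝ) (hbound : ∀ (z : X), ∀ σ ∈ Set.Icc (0 : ℝ) 1, z = σ • B z → ‖z‖ ≤ C) :
    ∃ z : X, B z = z := by
  obtain ⟨R, hR, hCR⟩ : ∃ R, 0 < R ∧ C < R :=
    ⟨max 0 C + 1, by positivity, (le_max_right 0 C).trans_lt (lt_add_one _)⟩
  obtain ⟨z, -, hz⟩ := exists_isFixedPt_of_forall_sphere_ne_smul hR hcont.continuousOn
    (hcompact _ isBounded_closedBall) fun z hz σ hσ h =>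
      (hbound z σ (Ioo_subset_Icc_self hσ) h).not_gt (mem_sphere_zero_iff_norm.1 hz ▸ hCR)
  exact ⟨z, hz⟩

theorem stmt_13 {X : Type*} [NormedAddCommGroup X] [NormedSpace ℝ X] [CompleteSpace X]
    (B : X → X) (hcont : Continuous B)
    (hcompact : ∀ S : Set X, Bornology.IsBounded S → IsCompact (closure (B '' S)))
    (C : ℝ) (hbound : ∀ (z : X), ∀ σ ∈ Set.Icc (0 : ℝ) 1, z = σ • B z → ‖z‖ ≤ C) :
    ∃ z : X, B z = z :=
  stmt_13_general B hcont hcompact C hbound
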